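/- If f : S^{d−1} → R is L-Lipschitz with respect to the geodesic metric dist(x,y) = arccos⟨x,y⟩ and M is a median of f with respect to the normalized uniform measure μ, then for all t ≥ 0: μ{x : |f(x) − M| ≥ t} ≤ √(π/2) · exp(−(d−2)t²/(2L²)). -/

import Mathlib

open MeasureTheory Real

/-!
Among the `L`-Lipschitz functions on the sphere that are equimeasurable with `f`, a set which is
compact by Arzelà–Ascoli, choose a maximizer `g` of `∫ g(x) ⟪e, x⟫ dμ(x)`. Polarizing `g` with
respect to a hyperplane preserves both the Lipschitz constant and the distribution, and strictly
increases the functional unless `g` already takes its larger values on the side of `e`; hence `g` is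
a monotone function of the height `⟪e, x⟫`. For such a `g` the median is attained on the equator, so
`{t ≤ |g - M|}` lies in the two polar caps at angular distance `t / L` from the equator. The
rotation invariant measure of a cap equals the Gaussian measure of the cone over it, which is
estimated by integrating the one-dimensional Gaussian tail.
-/

open Filter InnerProductGeometry Metric Module ProbabilityTheory Set Topology
open scoped BoundedContinuousFunction ENNReal NNReal RealInnerProductSpace

section GaussianCone

theorem gaussianReal_Ici_zero {v : ℝ≥0} (hv : v ≠ 0) : gaussianReal 0 v (Ici 0) = 2⁻¹ := by
  have := nullSingletonClass_gaussianReal (μ := 0) hv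
  have hsymm : gaussianReal 0 v (Iic 0) = gaussianReal 0 v (Ici 0) := by
    have hneg : (gaussianReal 0 v).map (fun x ↦ -x) = gaussianReal 0 v := by
      rw [gaussianReal_map_neg, neg_zero]
    conv_lhs => rw [← hneg, Measure.map_apply (by fun_prop) measurableSet_Iic]
    simp
  have htotal := measure_add_measure_compl (μ := gaussianReal 0 v)
    (measurableSet_Ici (a := (0 : ℝ)))
  rw [compl_Ici, measure_congr Iio_ae_eq_Iic, hsymm, measure_univ, ← mul_two] at htotal
  exact ENNReal.eq_inv_of_mul_eq_one_left htotal

theorem gaussianReal_Ici_le {v : ℝ≥0} (hv : v ≠ 0) {a : ℝ} (ha : 0 ≤ a) :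
    gaussianReal 0 v (Ici a) ≤ ENNReal.ofReal (exp (-a ^ 2 / (2 * v))) * 2⁻¹ := by
  calc gaussianReal 0 v (Ici a)
      = ∫⁻ x in Ici 0, gaussianPDF 0 v (x + a) := by
        rw [gaussianReal_apply _ hv, ← lintegral_indicator measurableSet_Ici,
          ← lintegral_indicator measurableSet_Ici, ← lintegral_add_right_eq_self _ a]
        simp [indicator]
    _ ≤ ∫⁻ x in Ici 0, ENNReal.ofReal (exp (-a ^ 2 / (2 * v))) * gaussianPDF 0 v x := by
        refine setLIntegral_mono (by fun_prop) fun x (hx : 0 ≤ x) ↦ ?_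
        rw [gaussianPDF, gaussianPDF, ← ENNReal.ofReal_mul (by positivity), gaussianPDFReal,
          gaussianPDFReal, mul_left_comm, ← exp_add, ← add_div]
        gcongr
        nlinarith
    _ = ENNReal.ofReal (exp (-a ^ 2 / (2 * v))) * 2⁻¹ := by
        rw [lintegral_const_mul _ (by fun_prop), ← gaussianReal_apply _ hv,
          gaussianReal_Ici_zero hv]

theorem integral_exp_neg_mul_sq_gaussianReal (c : ℝ) :
    ∫ y, exp (-(c * y ^ 2) / 2) ∂gaussianReal 0 1 = (√(1 + c))⁻¹ := by
  have hdensity (y : ℝ) : gaussianPDFReal 0 1 y • exp (-(c * y ^ 2) / 2) =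
      (√(2 * π))⁻¹ * exp (-((1 + c) / 2) * y ^ 2) := by
    rw [gaussianPDFReal, smul_eq_mul, mul_assoc, ← exp_add]
    congr 2
    · simp
    · push_cast; ring
  simp_rw [integral_gaussianReal_eq_integral_smul one_ne_zero, hdensity]
  rw [integral_const_mul, integral_gaussian, ← sqrt_inv, ← sqrt_mul (by positivity), ← sqrt_inv]
  congr 1
  field_simp

variable {ι : Type*} [Fintype ι]

theorem lintegral_exp_neg_mul_sum_sq_pi_gaussianReal {c : ℝ} (hc : 0 ≤ c) :
    ∫⁻ y : ι → ℝ, ENNReal.ofReal (exp (-(c * ∑ i, y i ^ 2) / 2))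
      ∂(Measure.pi fun _ ↦ gaussianReal 0 1) =
      ENNReal.ofReal ((√(1 + c))⁻¹ ^ Fintype.card ι) := by
  have hprod (y : ι → ℝ) :
      exp (-(c * ∑ i, y i ^ 2) / 2) = ∏ i, exp (-(c * y i ^ 2) / 2) := by
    rw [← exp_sum, Finset.mul_sum, ← Finset.sum_neg_distrib, Finset.sum_div]
  have hint : Integrable (fun y ↦ exp (-(c * y ^ 2) / 2)) (gaussianReal 0 1) := by
    refine .of_bound (by fun_prop) 1 (.of_forall fun y ↦ ?_)
    rw [norm_of_nonneg (exp_nonneg _), exp_le_one_iff, neg_div]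
    exact neg_nonpos.2 (by positivity)
  simp_rw [hprod]
  rw [← ofReal_integral_eq_lintegral_ofReal (.fintype_prod fun _ ↦ hint)
      (.of_forall fun y ↦ by positivity),
    integral_fintype_prod_eq_pow (fun y ↦ exp (-(c * y ^ 2) / 2)),
    integral_exp_neg_mul_sq_gaussianReal]

theorem prod_pi_gaussianReal_cone_le {a : ℝ} (ha : 0 ≤ a) :
    ((gaussianReal 0 1).prod (Measure.pi fun _ : ι ↦ gaussianReal 0 1))
      {p | a * √(∑ i, p.2 i ^ 2) ≤ p.1} ≤
      ENNReal.ofReal ((√(1 + a ^ 2))⁻¹ ^ Fintype.card ι) * 2⁻¹ := by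
  have hmeas : MeasurableSet {p : ℝ × (ι → ℝ) | a * √(∑ i, p.2 i ^ 2) ≤ p.1} :=
    measurableSet_le (by fun_prop) (by fun_prop)
  rw [Measure.prod_apply_symm hmeas, ← lintegral_exp_neg_mul_sum_sq_pi_gaussianReal (sq_nonneg a),
    ← lintegral_mul_const _ (by fun_prop)]
  refine lintegral_mono fun y ↦ ?_
  have htail := gaussianReal_Ici_le one_ne_zero (show 0 ≤ a * √(∑ i, y i ^ 2) by positivity)
  rwa [mul_pow, sq_sqrt (by positivity), NNReal.coe_one, mul_one] at htail

theorem mul_sqrt_sum_succ_sq_le_of_mul_norm_le {n : ℕ} {h : ℝ} (h0 : 0 ≤ h) (h1 : h < 1)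
    {X : EuclideanSpace ℝ (Fin (n + 1))} (hX : h * ‖X‖ ≤ X 0) :
    h / √(1 - h ^ 2) * √(∑ i : Fin n, X i.succ ^ 2) ≤ X 0 := by
  have hpos : 0 < 1 - h ^ 2 := by nlinarith
  have hX0 : 0 ≤ X 0 := le_trans (by positivity) hX
  rw [div_mul_eq_mul_div, div_le_iff₀ (sqrt_pos.2 hpos)]
  refine le_of_sq_le_sq ?_ (by positivity)
  have hsq : (h * ‖X‖) ^ 2 ≤ X 0 ^ 2 := by gcongr
  rw [mul_pow, EuclideanSpace.real_norm_sq_eq, Fin.sum_univ_succ] at hsq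
  rw [mul_pow, mul_pow, sq_sqrt (by positivity), sq_sqrt hpos.le]
  linarith

theorem stdGaussian_euclideanSpace_cone_le {n : ℕ} {h : ℝ} (h0 : 0 ≤ h) (h1 : h < 1) :
    stdGaussian (EuclideanSpace ℝ (Fin (n + 1))) {X | h * ‖X‖ ≤ X 0} ≤
      ENNReal.ofReal (√(1 - h ^ 2) ^ n) * 2⁻¹ := by
  have hpos : 0 < 1 - h ^ 2 := by nlinarith
  have hslope : (√(1 + (h / √(1 - h ^ 2)) ^ 2))⁻¹ = √(1 - h ^ 2) := by
    rw [div_pow, sq_sqrt hpos.le, ← sqrt_inv]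
    congr 1
    field_simp
    ring
  have hsplit := measurePreserving_piFinSuccAbove (fun _ : Fin (n + 1) ↦ gaussianReal 0 1) 0
  rw [← map_pi_eq_stdGaussian, Measure.map_apply (by fun_prop)
    (measurableSet_le (by fun_prop) (by fun_prop))]
  calc (Measure.pi fun _ : Fin (n + 1) ↦ gaussianReal 0 1)
        (WithLp.toLp 2 ⁻¹' {X | h * ‖X‖ ≤ X 0})
      ≤ (Measure.pi fun _ : Fin (n + 1) ↦ gaussianReal 0 1)
          (MeasurableEquiv.piFinSuccAbove (fun _ ↦ ℝ) 0 ⁻¹'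
            {p | h / √(1 - h ^ 2) * √(∑ i, p.2 i ^ 2) ≤ p.1}) :=
        measure_mono fun _ ↦ mul_sqrt_sum_succ_sq_le_of_mul_norm_le h0 h1
    _ = ((gaussianReal 0 1).prod (Measure.pi fun _ : Fin n ↦ gaussianReal 0 1))
          {p | h / √(1 - h ^ 2) * √(∑ i, p.2 i ^ 2) ≤ p.1} :=
        hsplit.measure_preimage_equiv _
    _ ≤ ENNReal.ofReal (√(1 - h ^ 2) ^ n) * 2⁻¹ := by
        have hcone := prod_pi_gaussianReal_cone_le (ι := Fin n)
          (div_nonneg h0 (sqrt_nonneg (1 - h ^ 2)))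
        rwa [hslope, Fintype.card_fin] at hcone

end GaussianCone

section Sphere

variable {E F : Type*} [NormedAddCommGroup E] [InnerProductSpace ℝ E]
  [NormedAddCommGroup F] [InnerProductSpace ℝ F]

theorem exists_linearIsometryEquiv_apply_eq [FiniteDimensional ℝ E] [FiniteDimensional ℝ F]
    (hEF : finrank ℝ E = finrank ℝ F) {v : E} {w : F} (hvw : ‖v‖ = ‖w‖) :
    ∃ g : E ≃ₗᵢ[ℝ] F, g v = w := by
  let g := (stdOrthonormalBasis ℝ E).equiv (stdOrthonormalBasis ℝ F) (finCongr hEF)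
  refine ⟨g.trans (ℝ ∙ (g v - w))ᗮ.reflection, ?_⟩
  simp [Submodule.reflection_sub ((g.norm_map v).trans hvw)]

/-- The map of the unit sphere to itself induced by a linear isometry. -/
def sphereMap (g : E ≃ₗᵢ[ℝ] E) (x : sphere (0 : E) 1) : sphere (0 : E) 1 :=
  ⟨g x, by simp⟩

@[simp]
theorem coe_sphereMap (g : E ≃ₗᵢ[ℝ] E) (x : sphere (0 : E) 1) : (sphereMap g x : E) = g x := rfl

theorem continuous_sphereMap (g : E ≃ₗᵢ[ℝ] E) : Continuous (sphereMap g) := by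
  unfold sphereMap
  fun_prop

theorem angle_coe_sphere (x y : sphere (0 : E) 1) : angle (x : E) y = arccos ⟪(x : E), y⟫ := by
  simp [angle]

theorem inner_coe_sphere (x y : sphere (0 : E) 1) : ⟪(x : E), y⟫ = cos (angle (x : E) y) := by
  simp [cos_angle]

theorem cos_le_exp_neg_sq_div_two {t : ℝ} (h0 : 0 ≤ t) (h1 : t ≤ π / 2) :
    cos t ≤ exp (-t ^ 2 / 2) := by
  have hanti : AntitoneOn (fun s ↦ exp (s ^ 2 / 2) * cos s) (Icc 0 (π / 2)) := by
    refine antitoneOn_of_deriv_nonpos (convex_Icc _ _) (by fun_prop) (by fun_prop) fun s hs ↦ ?_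
    rw [interior_Icc] at hs
    have hderiv : HasDerivAt (fun s ↦ exp (s ^ 2 / 2) * cos s)
        (exp (s ^ 2 / 2) * (s * cos s - sin s)) s := by
      have hsq : HasDerivAt (fun s : ℝ ↦ s ^ 2 / 2) s s := by
        simpa using (hasDerivAt_pow 2 s).div_const 2
      exact (hsq.exp.mul (hasDerivAt_cos s)).congr_deriv (by ring)
    have htan : s * cos s ≤ sin s := by
      rw [← le_div_iff₀ (cos_pos_of_mem_Ioo ⟨by linarith [hs.1], hs.2⟩), ← tan_eq_sin_div_cos]
      exact le_tan hs.1.le hs.2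
    rw [hderiv.deriv]
    exact mul_nonpos_of_nonneg_of_nonpos (exp_nonneg _) (sub_nonpos.2 htan)
  have hle : exp (t ^ 2 / 2) * cos t ≤ 1 := by
    simpa using hanti ⟨le_rfl, by positivity⟩ ⟨h0, h1⟩ h0
  rwa [neg_div, exp_neg, ← one_div, le_div_iff₀' (exp_pos _)]

variable [MeasurableSpace E] [BorelSpace E]

/-- Invariance of a measure on the unit sphere under the whole orthogonal group; among probability
measures this characterizes the normalized uniform measure. -/
def IsRotationInvariant (μ : Measure (sphere (0 : E) 1)) : Prop :=
  ∀ g : E ≃ₗᵢ[ℝ] E, μ.map (sphereMap g) = μ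

namespace IsRotationInvariant

variable {μ : Measure (sphere (0 : E) 1)}

theorem measurePreserving (hμ : IsRotationInvariant μ) (g : E ≃ₗᵢ[ℝ] E) :
    MeasurePreserving (sphereMap g) μ μ :=
  ⟨(continuous_sphereMap g).measurable, hμ g⟩

variable [FiniteDimensional ℝ E]

theorem isOpenPosMeasure [NeZero μ] (hμ : IsRotationInvariant μ) : μ.IsOpenPosMeasure := by
  refine ⟨fun U hU ⟨p, hp⟩ hzero ↦ NeZero.ne μ <| Measure.measure_univ_eq_zero.1 ?_⟩
  refine measure_null_of_locally_null _ fun x _ ↦ ?_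
  obtain ⟨g, hg⟩ := exists_linearIsometryEquiv_apply_eq (v := (x : E)) (w := (p : E)) rfl (by simp)
  have hgx : sphereMap g x = p := Subtype.ext hg
  refine ⟨sphereMap g ⁻¹' U, mem_nhdsWithin_of_mem_nhds ?_, ?_⟩
  · exact (continuous_sphereMap g).continuousAt.preimage_mem_nhds (hgx ▸ hU.mem_nhds hp)
  · rw [(hμ.measurePreserving g).measure_preimage hU.measurableSet.nullMeasurableSet, hzero]

end IsRotationInvariant

theorem stdGaussian_cone_le [FiniteDimensional ℝ E] {n : ℕ} (hn : finrank ℝ E = n + 1) {v : E}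
    (hv : ‖v‖ = 1) {h : ℝ} (h0 : 0 ≤ h) (h1 : h < 1) :
    stdGaussian E {X | h * ‖X‖ ≤ ⟪v, X⟫} ≤ ENNReal.ofReal (√(1 - h ^ 2) ^ n) * 2⁻¹ := by
  obtain ⟨g, hg⟩ := exists_linearIsometryEquiv_apply_eq (v := v)
    (w := EuclideanSpace.single (0 : Fin (n + 1)) (1 : ℝ)) (by simp [hn]) (by simp [hv])
  have hcoord (X : E) : ⟪v, X⟫ = g X 0 := by
    rw [← g.inner_map_map, hg, EuclideanSpace.inner_single_left]
    simp
  have hpreimage : {X | h * ‖X‖ ≤ ⟪v, X⟫} =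
      g ⁻¹' {X : EuclideanSpace ℝ (Fin (n + 1)) | h * ‖X‖ ≤ X 0} := by
    simp [hcoord]
  rw [hpreimage, ← Measure.map_apply (by fun_prop) (measurableSet_le (by fun_prop) (by fun_prop)),
    stdGaussian_map]
  exact stdGaussian_euclideanSpace_cone_le h0 h1

namespace IsRotationInvariant

variable [FiniteDimensional ℝ E] {μ : Measure (sphere (0 : E) 1)}

theorem measure_le_inner_le_measure_cone (hμ : IsRotationInvariant μ) (e : sphere (0 : E) 1)
    (h : ℝ) (X : E) :
    μ {x | h ≤ ⟪(e : E), x⟫} ≤ μ {x : sphere (0 : E) 1 | h * ‖X‖ ≤ ⟪(x : E), X⟫} := by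
  obtain ⟨g, hg⟩ := exists_linearIsometryEquiv_apply_eq (v := ‖X‖ • (e : E)) (w := X) rfl
    (by simp [norm_smul])
  have hmeas : MeasurableSet {x : sphere (0 : E) 1 | h * ‖X‖ ≤ ⟪(x : E), X⟫} :=
    measurableSet_le (by fun_prop) (by fun_prop)
  rw [← (hμ.measurePreserving g).measure_preimage hmeas.nullMeasurableSet]
  refine measure_mono fun x (hx : h ≤ ⟪(e : E), x⟫) ↦ ?_
  have hinner : ⟪g x, X⟫ = ‖X‖ * ⟪(e : E), x⟫ := by
    conv_lhs => rw [← hg]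
    rw [g.inner_map_map, real_inner_smul_right, real_inner_comm]
  rw [mem_preimage, mem_ofPred_eq, coe_sphereMap, hinner, mul_comm]
  gcongr

variable [IsProbabilityMeasure μ]

-- Integrate the cone `{(x, X) | h * ‖X‖ ≤ ⟪x, X⟫}` against `μ` and the Gaussian measure in both
-- orders: the sections at fixed `X` are caps, those at fixed `x` are Gaussian cones.
theorem measure_le_inner_le_of_lt_one (hμ : IsRotationInvariant μ) {n : ℕ}
    (hn : finrank ℝ E = n + 1) (e : sphere (0 : E) 1) {h : ℝ} (h0 : 0 ≤ h) (h1 : h < 1) :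
    μ {x | h ≤ ⟪(e : E), x⟫} ≤ ENNReal.ofReal (√(1 - h ^ 2) ^ n) * 2⁻¹ := by
  let T : Set (sphere (0 : E) 1 × E) := {p | h * ‖p.2‖ ≤ ⟪(p.1 : E), p.2⟫}
  have hT : MeasurableSet T := (isClosed_le (by fun_prop) (by fun_prop)).measurableSet
  calc μ {x | h ≤ ⟪(e : E), x⟫}
      = ∫⁻ _, μ {x | h ≤ ⟪(e : E), x⟫} ∂stdGaussian E := by simp
    _ ≤ ∫⁻ X, μ ((fun x ↦ (x, X)) ⁻¹' T) ∂stdGaussian E :=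
        lintegral_mono fun X ↦ hμ.measure_le_inner_le_measure_cone e h X
    _ = ∫⁻ x, stdGaussian E (Prod.mk x ⁻¹' T) ∂μ := by
        rw [← Measure.prod_apply_symm hT, Measure.prod_apply hT]
    _ ≤ ∫⁻ _, ENNReal.ofReal (√(1 - h ^ 2) ^ n) * 2⁻¹ ∂μ :=
        lintegral_mono fun x ↦ stdGaussian_cone_le hn (norm_eq_of_mem_sphere x) h0 h1
    _ = ENNReal.ofReal (√(1 - h ^ 2) ^ n) * 2⁻¹ := by simp

theorem measure_le_inner_le (hμ : IsRotationInvariant μ) {n : ℕ} (hn : finrank ℝ E = n + 1)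
    (e : sphere (0 : E) 1) {h : ℝ} (h0 : 0 ≤ h) (h1 : h ≤ 1) :
    μ {x | h ≤ ⟪(e : E), x⟫} ≤ ENNReal.ofReal (√(1 - h ^ 2) ^ n) * 2⁻¹ := by
  obtain h1 | rfl := h1.lt_or_eq
  · exact hμ.measure_le_inner_le_of_lt_one hn e h0 h1
  have hlim : Tendsto (fun s : ℝ ↦ ENNReal.ofReal (√(1 - s ^ 2) ^ n) * 2⁻¹) (𝓝[<] 1)
      (𝓝 (ENNReal.ofReal (√(1 - 1 ^ 2) ^ n) * 2⁻¹)) := by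
    refine ENNReal.Tendsto.mul_const (ENNReal.tendsto_ofReal ?_) (.inr (by simp))
    exact tendsto_nhdsWithin_of_tendsto_nhds ((by fun_prop : Continuous _).tendsto _)
  refine ge_of_tendsto hlim ?_
  filter_upwards [Ioo_mem_nhdsLT zero_lt_one] with s hs
  refine le_trans (measure_mono fun x hx ↦ hs.2.le.trans hx) ?_
  exact hμ.measure_le_inner_le_of_lt_one hn e hs.1.le hs.2

theorem measure_angle_le_le (hμ : IsRotationInvariant μ) {n : ℕ} (hn : finrank ℝ E = n + 1)
    (e : sphere (0 : E) 1) {τ : ℝ} (hτ : 0 ≤ τ) :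
    μ {x | angle (e : E) x ≤ π / 2 - τ} ≤ ENNReal.ofReal (exp (-(n * τ ^ 2) / 2)) * 2⁻¹ := by
  obtain hτ' | hτ' := lt_or_ge (π / 2) τ
  · have hempty : {x : sphere (0 : E) 1 | angle (e : E) x ≤ π / 2 - τ} = ∅ := by
      refine eq_empty_of_forall_notMem fun x (hx : angle (e : E) x ≤ π / 2 - τ) ↦ ?_
      linarith [angle_nonneg (e : E) x]
    simp [hempty]
  have hcos : 0 ≤ cos τ := cos_nonneg_of_mem_Icc ⟨by linarith [pi_pos], hτ'⟩
  calc μ {x | angle (e : E) x ≤ π / 2 - τ}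
      ≤ μ {x | sin τ ≤ ⟪(e : E), x⟫} := by
        refine measure_mono fun x (hx : angle (e : E) x ≤ π / 2 - τ) ↦ ?_
        rw [mem_ofPred_eq, inner_coe_sphere, ← cos_pi_div_two_sub]
        exact cos_le_cos_of_nonneg_of_le_pi (angle_nonneg _ _) (by linarith [pi_pos]) hx
    _ ≤ ENNReal.ofReal (√(1 - sin τ ^ 2) ^ n) * 2⁻¹ :=
        hμ.measure_le_inner_le hn e (sin_nonneg_of_nonneg_of_le_pi hτ (by linarith [pi_pos]))
          (sin_le_one τ)
    _ ≤ ENNReal.ofReal (exp (-(n * τ ^ 2) / 2)) * 2⁻¹ := by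
        rw [← cos_sq', sqrt_sq hcos, neg_div, mul_div_assoc, ← mul_neg, exp_nat_mul, ← neg_div]
        gcongr
        exact cos_le_exp_neg_sq_div_two hτ hτ'

theorem measure_angle_le_lt_half (hμ : IsRotationInvariant μ) (hE : 2 ≤ finrank ℝ E)
    (e : sphere (0 : E) 1) {θ : ℝ} (hθ : θ < π / 2) :
    μ {x | angle (e : E) x ≤ θ} < 2⁻¹ := by
  have hpos : 0 < (((finrank ℝ E - 1 : ℕ) : ℝ) * (π / 2 - θ) ^ 2) / 2 := by
    have : 0 < finrank ℝ E - 1 := by lia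
    have : 0 < π / 2 - θ := sub_pos.2 hθ
    positivity
  have hcap := hμ.measure_angle_le_le (n := finrank ℝ E - 1) (by lia) e (sub_pos.2 hθ).le
  rw [sub_sub_cancel] at hcap
  refine hcap.trans_lt ?_
  nth_rw 2 [← one_mul (2⁻¹ : ℝ≥0∞)]
  refine ENNReal.mul_lt_mul_left (by simp) (by simp) ?_
  rw [ENNReal.ofReal_lt_one, exp_lt_one_iff, neg_div]
  exact neg_lt_zero.2 hpos

end IsRotationInvariant

end Sphere

section Lipschitz

variable {E : Type*} [NormedAddCommGroup E] [InnerProductSpace ℝ E]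

theorem angle_le_pi_div_two_mul_norm_sub {x y : E} (hx : ‖x‖ = 1) (hy : ‖y‖ = 1) :
    angle x y ≤ π / 2 * ‖x - y‖ := by
  have hcos : ⟪x, y⟫ ≤ 1 - 2 / π ^ 2 * angle x y ^ 2 := by
    rw [inner_eq_cos_angle_of_norm_eq_one hx hy]
    exact cos_le_one_sub_mul_cos_sq (abs_le.2 ⟨by linarith [pi_pos, angle_nonneg x y],
      angle_le_pi x y⟩)
  refine le_of_sq_le_sq ?_ (by positivity)
  have hnorm : ‖x - y‖ ^ 2 = 2 - 2 * ⟪x, y⟫ := by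
    rw [norm_sub_sq_real, hx, hy]
    ring
  rw [mul_pow, hnorm]
  calc angle x y ^ 2 = (π / 2) ^ 2 * (2 - 2 * (1 - 2 / π ^ 2 * angle x y ^ 2)) := by
        field_simp
        ring
    _ ≤ (π / 2) ^ 2 * (2 - 2 * ⟪x, y⟫) := by gcongr

/-- Being `L`-Lipschitz on the unit sphere with respect to the geodesic metric, which is the
angle between two points. -/
def GeodesicLipschitz (L : ℝ) (f : sphere (0 : E) 1 → ℝ) : Prop :=
  ∀ x y, |f x - f y| ≤ L * angle (x : E) y

namespace GeodesicLipschitz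

variable {L : ℝ} {f : sphere (0 : E) 1 → ℝ}

theorem neg (hf : GeodesicLipschitz L f) : GeodesicLipschitz L (-f) := fun x y ↦ by
  simpa [abs_sub_comm, neg_add_eq_sub] using hf x y

theorem lipschitzWith (hf : GeodesicLipschitz L f) (hL : 0 ≤ L) :
    LipschitzWith (L * (π / 2)).toNNReal f := by
  refine .of_dist_le' fun x y ↦ (hf x y).trans ?_
  rw [Subtype.dist_eq, dist_eq_norm, mul_assoc]
  gcongr
  exact angle_le_pi_div_two_mul_norm_sub (norm_eq_of_mem_sphere x) (norm_eq_of_mem_sphere y)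

theorem isClosed_setOf {X : Type*} [TopologicalSpace X]
    {F : X → sphere (0 : E) 1 → ℝ} (hF : ∀ x, Continuous (F · x)) :
    IsClosed {a | GeodesicLipschitz L (F a)} := by
  simp only [GeodesicLipschitz, ofPred_forall]
  exact isClosed_iInter fun x ↦ isClosed_iInter fun y ↦ isClosed_le (by fun_prop) (by fun_prop)

end GeodesicLipschitz

end Lipschitz

section Polarization

variable {E : Type*} [NormedAddCommGroup E] [InnerProductSpace ℝ E]

/-- The reflection of the unit sphere in the hyperplane orthogonal to `u`. -/
noncomputable def sphereReflection (u : E) : sphere (0 : E) 1 → sphere (0 : E) 1 :=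
  sphereMap (ℝ ∙ u)ᗮ.reflection

variable {u : E} {x y : sphere (0 : E) 1}

theorem sphereReflection_sphereReflection : sphereReflection u (sphereReflection u x) = x :=
  Subtype.ext <| by simp [sphereReflection]

theorem sphereReflection_sub : sphereReflection (x - y : E) x = y :=
  Subtype.ext <| Submodule.reflection_sub (by simp)

theorem inner_sphereReflection (v : E) :
    ⟪v, sphereReflection u x⟫ = ⟪v, x⟫ - 2 * (⟪u, v⟫ * ⟪u, x⟫ / ‖u‖ ^ 2) := by
  rw [sphereReflection, coe_sphereMap, Submodule.reflection_orthogonal_apply,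
    Submodule.reflection_singleton_apply]
  simp only [inner_neg_right, inner_sub_right, inner_smul_right, two_smul, inner_add_right,
    real_inner_comm u v, RCLike.ofReal_real_eq_id, id_eq]
  ring

theorem inner_normal_sphereReflection : ⟪u, sphereReflection u x⟫ = -⟪u, x⟫ := by
  rw [inner_sphereReflection, real_inner_self_eq_norm_sq]
  obtain rfl | hu := eq_or_ne u 0
  · simp
  · field_simp
    ring

theorem sphereReflection_eq_self (hx : ⟪u, x⟫ = 0) : sphereReflection u x = x :=
  Subtype.ext <| ext_inner_left ℝ fun v ↦ by simp [inner_sphereReflection, hx]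

theorem angle_sphereReflection_sphereReflection :
    angle (sphereReflection u x : E) (sphereReflection u y) = angle (x : E) y :=
  LinearIsometry.angle_map (ℝ ∙ u)ᗮ.reflection.toLinearIsometry x y

theorem angle_sphereReflection_le (hx : ⟪u, x⟫ ≤ 0) (hy : 0 ≤ ⟪u, y⟫) :
    angle (x : E) (sphereReflection u y) ≤ angle (x : E) y := by
  rw [angle_coe_sphere, angle_coe_sphere, inner_sphereReflection]
  have hdefect : ⟪u, x⟫ * ⟪u, y⟫ / ‖u‖ ^ 2 ≤ 0 :=
    div_nonpos_of_nonpos_of_nonneg (mul_nonpos_of_nonpos_of_nonneg hx hy) (sq_nonneg _)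
  exact arccos_le_arccos (by linarith)

/-- The polarization (two-point symmetrization) of `f` towards `u`: on each pair of points
exchanged by the reflection in the hyperplane orthogonal to `u`, the larger value of `f` is moved
to the point on the side of `u`. -/
noncomputable def polarization (u : E) (f : sphere (0 : E) 1 → ℝ) (x : sphere (0 : E) 1) : ℝ :=
  if 0 ≤ ⟪u, x⟫ then max (f x) (f (sphereReflection u x)) else min (f x) (f (sphereReflection u x))

variable {f : sphere (0 : E) 1 → ℝ}

theorem polarization_of_nonneg (hx : 0 ≤ ⟪u, x⟫) :
    polarization u f x = max (f x) (f (sphereReflection u x)) :=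
  if_pos hx

theorem polarization_of_nonpos (hx : ⟪u, x⟫ ≤ 0) :
    polarization u f x = min (f x) (f (sphereReflection u x)) := by
  obtain hx | hx := hx.lt_or_eq
  · exact if_neg hx.not_ge
  · simp [polarization, sphereReflection_eq_self hx]

theorem polarization_add_polarization_sphereReflection {M : Type*} [AddCommMonoid M] (φ : ℝ → M) :
    φ (polarization u f x) + φ (polarization u f (sphereReflection u x)) =
      φ (f x) + φ (f (sphereReflection u x)) := by
  have hside : ⟪u, sphereReflection u x⟫ = -⟪u, x⟫ := inner_normal_sphereReflection
  obtain hx | hx := le_total 0 ⟪u, x⟫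
  · rw [polarization_of_nonneg hx, polarization_of_nonpos (by rwa [hside, neg_nonpos]),
      sphereReflection_sphereReflection, min_comm]
    obtain h | h := le_total (f x) (f (sphereReflection u x)) <;> simp [h, add_comm]
  · rw [polarization_of_nonpos hx, polarization_of_nonneg (by rwa [hside, neg_nonneg]),
      sphereReflection_sphereReflection, max_comm]
    obtain h | h := le_total (f x) (f (sphereReflection u x)) <;> simp [h, add_comm]

theorem polarization_sub_sphereReflection :
    polarization u f (sphereReflection u x) - f (sphereReflection u x) =
      -(polarization u f x - f x) := by
  have hsum := polarization_add_polarization_sphereReflection (u := u) (x := x) (f := f) id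
  simp only [id_eq] at hsum
  linarith

theorem polarization_sub_mul_inner_nonneg : 0 ≤ (polarization u f x - f x) * ⟪u, x⟫ := by
  obtain hx | hx := le_total 0 ⟪u, x⟫
  · rw [polarization_of_nonneg hx]
    exact mul_nonneg (sub_nonneg.2 (le_max_left _ _)) hx
  · rw [polarization_of_nonpos hx]
    exact mul_nonneg_of_nonpos_of_nonpos (sub_nonpos.2 (min_le_left _ _)) hx

theorem GeodesicLipschitz.abs_polarization_sub_le_of_nonpos_of_nonneg {L : ℝ}
    (hf : GeodesicLipschitz L f) (hL : 0 ≤ L) (hx : ⟪u, x⟫ ≤ 0) (hy : 0 ≤ ⟪u, y⟫) :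
    |polarization u f x - polarization u f y| ≤ L * angle (x : E) y := by
  have hcross : L * angle (x : E) (sphereReflection u y) ≤ L * angle (x : E) y :=
    mul_le_mul_of_nonneg_left (angle_sphereReflection_le hx hy) hL
  have hangle : angle (sphereReflection u x : E) y = angle (x : E) (sphereReflection u y) := by
    rw [← angle_sphereReflection_sphereReflection (u := u), sphereReflection_sphereReflection]
  rw [polarization_of_nonpos hx, polarization_of_nonneg hy]
  obtain hmin | hmin := min_choice (f x) (f (sphereReflection u x)) <;>
    obtain hmax | hmax := max_choice (f y) (f (sphereReflection u y)) <;> rw [hmin, hmax]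
  · exact hf x y
  · exact (hf _ _).trans hcross
  · exact (hf _ _).trans (hangle ▸ hcross)
  · exact (hf _ _).trans_eq (by rw [angle_sphereReflection_sphereReflection])

theorem GeodesicLipschitz.polarization {L : ℝ} (hf : GeodesicLipschitz L f) (hL : 0 ≤ L) (u : E) :
    GeodesicLipschitz L (polarization u f) := by
  intro x y
  have hreflect : |f (sphereReflection u x) - f (sphereReflection u y)| ≤ L * angle (x : E) y :=
    (hf _ _).trans_eq (by rw [angle_sphereReflection_sphereReflection])
  obtain hx | hx := le_total 0 ⟪u, x⟫ <;> obtain hy | hy := le_total 0 ⟪u, y⟫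
  · rw [polarization_of_nonneg hx, polarization_of_nonneg hy]
    exact (abs_max_sub_max_le_max _ _ _ _).trans (max_le (hf x y) hreflect)
  · rw [abs_sub_comm, angle_comm]
    exact hf.abs_polarization_sub_le_of_nonpos_of_nonneg hL hy hx
  · exact hf.abs_polarization_sub_le_of_nonpos_of_nonneg hL hx hy
  · rw [polarization_of_nonpos hx, polarization_of_nonpos hy]
    exact (abs_min_sub_min_le_max _ _ _ _).trans (max_le (hf x y) hreflect)

variable [MeasurableSpace E] [BorelSpace E]

theorem measurable_polarization (u : E) (hf : Measurable f) : Measurable (polarization u f) := by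
  have hreflect : Measurable (f ∘ sphereReflection u) :=
    hf.comp (continuous_sphereMap _).measurable
  exact .ite (measurableSet_le (by fun_prop) (by fun_prop)) (hf.max hreflect) (hf.min hreflect)

namespace IsRotationInvariant

variable {μ : Measure (sphere (0 : E) 1)}

theorem measurePreserving_sphereReflection (hμ : IsRotationInvariant μ) (u : E) :
    MeasurePreserving (sphereReflection u) μ μ :=
  hμ.measurePreserving _

theorem map_polarization (hμ : IsRotationInvariant μ) (u : E) (hf : Measurable f) :
    μ.map (polarization u f) = μ.map f := by
  have hpol := measurable_polarization u hf
  have hσ := hμ.measurePreserving_sphereReflection u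
  have hsym {g : sphere (0 : E) 1 → ℝ≥0∞} (hg : Measurable g) :
      ∫⁻ x, (g x + g (sphereReflection u x)) ∂μ = 2 * ∫⁻ x, g x ∂μ := by
    rw [lintegral_add_left hg, hσ.lintegral_comp hg, two_mul]
  refine Measure.ext_of_lintegral _ fun φ hφ ↦ ?_
  rw [lintegral_map hφ hpol, lintegral_map hφ hf]
  refine (ENNReal.mul_right_inj two_ne_zero ENNReal.ofNat_ne_top).1 ?_
  calc 2 * ∫⁻ x, φ (polarization u f x) ∂μ
      = ∫⁻ x, (φ (polarization u f x) + φ (polarization u f (sphereReflection u x))) ∂μ :=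
        (hsym (hφ.comp hpol)).symm
    _ = ∫⁻ x, (φ (f x) + φ (f (sphereReflection u x))) ∂μ := by
        simp_rw [polarization_add_polarization_sphereReflection]
    _ = 2 * ∫⁻ x, φ (f x) ∂μ := hsym (hφ.comp hf)

theorem integral_mul_inner_lt_integral_polarization_mul_inner [FiniteDimensional ℝ E]
    [IsFiniteMeasure μ] [μ.IsOpenPosMeasure] (hμ : IsRotationInvariant μ) (hf : Continuous f)
    (hpol : Continuous (polarization u f)) {v : E} (hv : 0 < ⟪u, v⟫) (hx : 0 < ⟪u, x⟫)
    (hfx : f x < f (sphereReflection u x)) :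
    ∫ y, f y * ⟪v, y⟫ ∂μ < ∫ y, polarization u f y * ⟪v, y⟫ ∂μ := by
  let gain (y : sphere (0 : E) 1) : ℝ := (polarization u f y - f y) * ⟪v, y⟫
  let pairGain (y : sphere (0 : E) 1) : ℝ := gain y + gain (sphereReflection u y)
  have hσ := hμ.measurePreserving_sphereReflection u
  have hgain : Continuous gain := by fun_prop
  have hgain_reflect : Continuous fun y ↦ gain (sphereReflection u y) :=
    hgain.comp (continuous_sphereMap _)
  have hpairGain : Continuous pairGain := hgain.add hgain_reflect
  have hpairGain_eq (y) : pairGain y =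
      (polarization u f y - f y) * ⟪u, y⟫ * (2 * ⟪u, v⟫ / ‖u‖ ^ 2) := by
    simp only [pairGain, gain]
    rw [polarization_sub_sphereReflection, inner_sphereReflection]
    ring
  have hintegrable {g : sphere (0 : E) 1 → ℝ} (hg : Continuous g) : Integrable g μ :=
    hg.integrable_of_hasCompactSupport (.of_compactSpace g)
  have hpos : 0 < ∫ y, pairGain y ∂μ := by
    refine integral_pos_of_integrable_nonneg_nonzero (x := x) hpairGain (hintegrable hpairGain)
      (fun y ↦ ?_) ?_
    · rw [hpairGain_eq]
      exact mul_nonneg polarization_sub_mul_inner_nonneg (by positivity)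
    · rw [hpairGain_eq, polarization_of_nonneg hx.le, max_eq_right hfx.le]
      have hu : u ≠ 0 := fun hu ↦ by simp [hu] at hv
      have := sub_pos.2 hfx
      positivity
  have hpair : ∫ y, pairGain y ∂μ = 2 * ∫ y, gain y ∂μ := by
    have hreflect : ∫ y, gain (sphereReflection u y) ∂μ = ∫ y, gain y ∂μ := by
      rw [← integral_map hσ.aemeasurable hgain.aestronglyMeasurable, hσ.map_eq]
    rw [integral_add (hintegrable hgain) (hintegrable hgain_reflect), hreflect, two_mul]
  have hgain_eq : ∫ y, gain y ∂μ =
      ∫ y, polarization u f y * ⟪v, y⟫ ∂μ - ∫ y, f y * ⟪v, y⟫ ∂μ := by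
    simp only [gain, sub_mul]
    exact integral_sub (hintegrable (by fun_prop)) (hintegrable (by fun_prop))
  linarith

end IsRotationInvariant

end Polarization

section MapEq

variable {X Y : Type*} [TopologicalSpace X] [MeasurableSpace X] {μ : Measure X}

theorem mem_of_map_eq_of_forall_mem [OpensMeasurableSpace X] [TopologicalSpace Y]
    [MeasurableSpace Y] [BorelSpace Y] [μ.IsOpenPosMeasure] {f g : X → Y} (hf : Measurable f)
    (hg : Continuous g) (hmap : μ.map g = μ.map f) {s : Set Y} (hs : IsClosed s)
    (hfs : ∀ x, f x ∈ s) (x : X) : g x ∈ s := by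
  have hzero : μ (g ⁻¹' sᶜ) = 0 := by
    rw [← Measure.map_apply hg.measurable hs.measurableSet.compl, hmap,
      Measure.map_apply hf hs.measurableSet.compl, preimage_compl,
      show f ⁻¹' s = univ from eq_univ_of_forall hfs, compl_univ, measure_empty]
  have hempty := ((hs.isOpen_compl.preimage hg).measure_eq_zero_iff μ).1 hzero
  simpa using eq_empty_iff_forall_notMem.1 hempty x

variable [IsFiniteMeasure μ]

theorem isClosed_setOf_map_eq [OpensMeasurableSpace X] [PseudoMetricSpace Y]
    [MeasurableSpace Y] [BorelSpace Y] (ν : Measure Y) [IsFiniteMeasure ν] :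
    IsClosed {g : X →ᵇ Y | μ.map g = ν} := by
  have hset : {g : X →ᵇ Y | μ.map g = ν} =
      ⋂ φ : Y →ᵇ ℝ, {g | ∫ x, φ (g x) ∂μ = ∫ y, φ y ∂ν} := by
    ext g
    have hintegral (φ : Y →ᵇ ℝ) : ∫ y, φ y ∂μ.map g = ∫ x, φ (g x) ∂μ :=
      integral_map g.continuous.aemeasurable φ.continuous.aestronglyMeasurable
    simp only [mem_iInter, mem_ofPred_eq, ← hintegral]
    exact ⟨fun h φ ↦ by rw [h], ext_of_forall_integral_eq_of_IsFiniteMeasure⟩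
  rw [hset]
  refine isClosed_iInter fun φ ↦ isClosed_eq ?_ continuous_const
  refine continuous_of_dominated (bound := fun _ ↦ ‖φ‖) (fun g ↦ ?_)
    (fun g ↦ .of_forall fun x ↦ φ.norm_coe_le_norm _) (integrable_const _) (.of_forall fun x ↦ ?_)
  · exact (φ.continuous.comp g.continuous).aestronglyMeasurable
  · fun_prop

theorem continuous_integral_mul_boundedContinuousFunction [BorelSpace X] (h : X →ᵇ ℝ) :
    Continuous fun g : X →ᵇ ℝ ↦ ∫ x, g x * h x ∂μ := by
  have hLp : Continuous fun g : X →ᵇ ℝ ↦ ∫ x, BoundedContinuousFunction.toLp 1 μ ℝ (g * h) x ∂μ :=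
    continuous_integral.comp ((BoundedContinuousFunction.toLp 1 μ ℝ).continuous.comp
      (continuous_id.mul continuous_const))
  refine hLp.congr fun g ↦ integral_congr_ae ?_
  exact BoundedContinuousFunction.coeFn_toLp 1 μ ℝ (g * h)

end MapEq

section Rearrangement

variable {E : Type*} [NormedAddCommGroup E] [InnerProductSpace ℝ E] [MeasurableSpace E]
  [BorelSpace E] {μ : Measure (sphere (0 : E) 1)} {L : ℝ} {f : sphere (0 : E) 1 → ℝ}

/-- The geodesically `L`-Lipschitz functions on the unit sphere with the same distribution as
`f`, as a subset of the metric space of bounded continuous functions. -/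
def lipschitzRearrangements (μ : Measure (sphere (0 : E) 1)) (L : ℝ) (f : sphere (0 : E) 1 → ℝ) :
    Set (sphere (0 : E) 1 →ᵇ ℝ) :=
  {g | GeodesicLipschitz L g ∧ μ.map g = μ.map f}

variable [FiniteDimensional ℝ E] [IsFiniteMeasure μ] [μ.IsOpenPosMeasure]

theorem isCompact_lipschitzRearrangements (hL : 0 ≤ L) (hf : Continuous f) :
    IsCompact (lipschitzRearrangements μ L f) := by
  refine BoundedContinuousFunction.arzela_ascoli₂ (range f) (isCompact_range hf) _
    (.inter ?_ (isClosed_setOf_map_eq _)) (fun g x hg ↦ ?_) ?_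
  · exact GeodesicLipschitz.isClosed_setOf fun x ↦ by fun_prop
  · exact mem_of_map_eq_of_forall_mem hf.measurable g.continuous hg.2
      (isCompact_range hf).isClosed mem_range_self x
  · exact (LipschitzWith.uniformEquicontinuous _ _ fun g ↦
      g.2.1.lipschitzWith hL).equicontinuous

theorem exists_monovary_rearrangement (hμ : IsRotationInvariant μ) (hL : 0 ≤ L)
    (hf : GeodesicLipschitz L f) (e : E) :
    ∃ g, GeodesicLipschitz L g ∧ μ.map g = μ.map f ∧
      Monovary g (fun x : sphere (0 : E) 1 ↦ ⟪e, x⟫) := by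
  have hcont {g : sphere (0 : E) 1 → ℝ} (hg : GeodesicLipschitz L g) : Continuous g :=
    (hg.lipschitzWith hL).continuous
  let height : sphere (0 : E) 1 →ᵇ ℝ := .mkOfCompact ⟨fun x ↦ ⟪e, x⟫, by fun_prop⟩
  have hcompact : IsCompact (lipschitzRearrangements μ L f) :=
    isCompact_lipschitzRearrangements hL (hcont hf)
  obtain ⟨g, ⟨hg, hgf⟩, hmax⟩ := hcompact.exists_isMaxOn ⟨.mkOfCompact ⟨f, hcont hf⟩, hf, rfl⟩
    (continuous_integral_mul_boundedContinuousFunction (μ := μ) height).continuousOn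
  refine ⟨g, hg, hgf, fun x y hxy ↦ ?_⟩
  by_contra! hlt
  have hpol := hg.polarization hL (y - x : E)
  have hle : ∫ z, polarization (y - x : E) g z * ⟪e, z⟫ ∂μ ≤ ∫ z, g z * ⟪e, z⟫ ∂μ :=
    hmax (a := .mkOfCompact ⟨_, hcont hpol⟩)
      ⟨hpol, (hμ.map_polarization _ (hcont hg).measurable).trans hgf⟩
  refine hle.not_gt (hμ.integral_mul_inner_lt_integral_polarization_mul_inner (x := y) (hcont hg)
    (hcont hpol) ?_ ?_ ?_)
  · rwa [inner_sub_left, real_inner_comm, real_inner_comm e, sub_pos]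
  · have hyx : (y : E) ≠ x := fun h ↦ hxy.ne (by simp only [h])
    have hlt_one := (inner_lt_one_iff_real_of_norm_eq_one (norm_eq_of_mem_sphere y)
      (norm_eq_of_mem_sphere x)).2 hyx
    rwa [real_inner_comm, inner_sub_right, real_inner_self_eq_norm_sq, norm_eq_of_mem_sphere,
      one_pow, sub_pos]
  · rwa [sphereReflection_sub]

end Rearrangement

section Geodesic

theorem exists_norm_eq_one_and_eq_norm_smul {V : Type*} [NormedAddCommGroup V] [NormedSpace ℝ V]
    [Nontrivial V] (v : V) : ∃ w : V, ‖w‖ = 1 ∧ v = ‖v‖ • w := by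
  obtain rfl | hv := eq_or_ne v 0
  · obtain ⟨w, hw⟩ := exists_norm_eq V zero_le_one
    exact ⟨w, hw, by simp⟩
  · exact ⟨‖v‖⁻¹ • v, norm_smul_inv_norm hv, by simp [hv]⟩

variable {E : Type*} [NormedAddCommGroup E] [InnerProductSpace ℝ E]

theorem exists_eq_cos_angle_smul_add_sin_angle_smul (hE : 2 ≤ finrank ℝ E)
    (e x : sphere (0 : E) 1) :
    ∃ w : E, ‖w‖ = 1 ∧ ⟪(e : E), w⟫ = 0 ∧
      (x : E) = cos (angle (e : E) x) • (e : E) + sin (angle (e : E) x) • w := by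
  have : FiniteDimensional ℝ E := .of_finrank_pos (by lia)
  have : Nontrivial (ℝ ∙ (e : E))ᗮ := by
    have hsum := (ℝ ∙ (e : E)).finrank_add_finrank_orthogonal
    rw [finrank_span_singleton (ne_zero_of_mem_unit_sphere e)] at hsum
    exact nontrivial_of_finrank_pos (R := ℝ) (by lia)
  have horth : (x : E) - cos (angle (e : E) x) • (e : E) ∈ (ℝ ∙ (e : E))ᗮ := by
    rw [Submodule.mem_orthogonal_singleton_iff_inner_right, inner_sub_right, inner_smul_right,
      inner_coe_sphere]
    simp
  obtain ⟨w, hw, hxw⟩ := exists_norm_eq_one_and_eq_norm_smul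
    (⟨_, horth⟩ : (ℝ ∙ (e : E))ᗮ)
  have hnorm : ‖(x : E) - cos (angle (e : E) x) • (e : E)‖ = sin (angle (e : E) x) := by
    rw [← sq_eq_sq₀ (norm_nonneg _) (sin_angle_nonneg _ _), norm_sub_sq_real, inner_smul_right,
      real_inner_comm, inner_coe_sphere, norm_smul, sin_sq]
    simp
    ring
  refine ⟨w, hw, Submodule.mem_orthogonal_singleton_iff_inner_right.1 w.2, ?_⟩
  rw [← hnorm, ← sub_eq_iff_eq_add']
  exact congrArg Subtype.val hxw

theorem exists_angle_eq_and_angle_eq_abs_sub (hE : 2 ≤ finrank ℝ E) (e x : sphere (0 : E) 1)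
    {ψ : ℝ} (h0 : 0 ≤ ψ) (hπ : ψ ≤ π) :
    ∃ y : sphere (0 : E) 1, angle (e : E) y = ψ ∧ angle (x : E) y = |angle (e : E) x - ψ| := by
  obtain ⟨w, hw, hew, hx⟩ := exists_eq_cos_angle_smul_add_sin_angle_smul hE e x
  have hee : ⟪(e : E), e⟫ = 1 := by simp
  have hww : ⟪w, w⟫ = 1 := by simp [hw]
  have hinner (α : ℝ) :
      ⟪cos α • (e : E) + sin α • w, cos ψ • (e : E) + sin ψ • w⟫ = cos (α - ψ) := by
    simp only [inner_add_left, inner_add_right, real_inner_smul_left, real_inner_smul_right, hee,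
      hww, hew, real_inner_comm (e : E) w, cos_sub]
    ring
  let y : sphere (0 : E) 1 := ⟨cos ψ • (e : E) + sin ψ • w, by
    have hsq := hinner ψ
    rw [sub_self, cos_zero, real_inner_self_eq_norm_sq] at hsq
    exact mem_sphere_zero_iff_norm.2 ((pow_eq_one_iff_of_nonneg (norm_nonneg _) two_ne_zero).1 hsq)⟩
  refine ⟨y, ?_, ?_⟩
  · rw [angle_coe_sphere, ← arccos_cos h0 hπ]
    simpa using congrArg arccos (hinner 0)
  · have hle : |angle (e : E) x - ψ| ≤ π :=
      abs_le.2 (by constructor <;> linarith [angle_nonneg (e : E) x, angle_le_pi (e : E) x])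
    calc angle (x : E) y = arccos (cos (angle (e : E) x - ψ)) := by
          rw [angle_coe_sphere, ← hinner, ← hx]
      _ = |angle (e : E) x - ψ| := by rw [← cos_abs, arccos_cos (abs_nonneg _) hle]

end Geodesic

section Concentration

variable {E : Type*} [NormedAddCommGroup E] [InnerProductSpace ℝ E] [MeasurableSpace E]
  [BorelSpace E] [FiniteDimensional ℝ E]

namespace IsRotationInvariant

variable {μ : Measure (sphere (0 : E) 1)} [IsProbabilityMeasure μ]

theorem le_of_monovary_inner (hμ : IsRotationInvariant μ) (hE : 2 ≤ finrank ℝ E)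
    {g : sphere (0 : E) 1 → ℝ} {e : sphere (0 : E) 1}
    (hmono : Monovary g (fun x : sphere (0 : E) 1 ↦ ⟪(e : E), x⟫)) {M : ℝ}
    (hM : 1 / 2 ≤ μ {x | g x ≤ M}) {y : sphere (0 : E) 1} (hy : π / 2 < angle (e : E) y) :
    g y ≤ M := by
  by_contra! hlt
  have hcap : μ {x | angle ((-e : sphere (0 : E) 1) : E) x ≤ π - angle (e : E) y} < 2⁻¹ :=
    hμ.measure_angle_le_lt_half hE (-e) (by linarith)
  refine (hM.trans (measure_mono fun x (hx : g x ≤ M) ↦ ?_)).not_gt (by rwa [one_div])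
  have hheight : ⟪(e : E), x⟫ ≤ ⟪(e : E), y⟫ := by
    by_contra! hxy
    exact (hmono hxy).not_gt (hx.trans_lt hlt)
  have hangle : angle (e : E) y ≤ angle (e : E) x := by
    rw [angle_coe_sphere, angle_coe_sphere]
    exact arccos_le_arccos hheight
  rw [mem_ofPred_eq, coe_neg_sphere, angle_neg_left]
  linarith

theorem angle_le_of_monovary_inner (hμ : IsRotationInvariant μ) (hE : 2 ≤ finrank ℝ E)
    {g : sphere (0 : E) 1 → ℝ} {L : ℝ} (hL : 0 < L) (hg : GeodesicLipschitz L g)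
    {e : sphere (0 : E) 1} (hmono : Monovary g (fun x : sphere (0 : E) 1 ↦ ⟪(e : E), x⟫)) {M : ℝ}
    (hM : 1 / 2 ≤ μ {x | g x ≤ M}) {t : ℝ} (ht : 0 < t) {x : sphere (0 : E) 1}
    (hx : M + t ≤ g x) : angle (e : E) x ≤ π / 2 - t / L := by
  by_contra! hlt
  have htL : 0 < t / L := div_pos ht hL
  obtain ⟨ψ, hψ, hψ'⟩ : ∃ ψ, max (π / 2) (angle (e : E) x - t / L) < ψ ∧
      ψ < min π (angle (e : E) x + t / L) := by
    refine exists_between (max_lt (lt_min ?_ ?_) (lt_min ?_ ?_)) <;>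
      linarith [pi_pos, angle_le_pi (e : E) x]
  rw [max_lt_iff] at hψ
  rw [lt_min_iff] at hψ'
  obtain ⟨y, hy, hxy⟩ := exists_angle_eq_and_angle_eq_abs_sub hE e x
    (by linarith [pi_pos]) hψ'.1.le
  have hgy : g y ≤ M := hμ.le_of_monovary_inner hE hmono hM (hy ▸ hψ.1)
  have hdist : L * angle (x : E) y < t := by
    rw [hxy, ← lt_div_iff₀' hL, abs_sub_lt_iff]
    constructor <;> linarith
  linarith [le_abs_self (g x - g y), hg x y]

theorem measure_median_add_le_le (hμ : IsRotationInvariant μ) (hE : 2 ≤ finrank ℝ E)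
    {f : sphere (0 : E) 1 → ℝ} {L : ℝ} (hL : 0 < L) (hf : GeodesicLipschitz L f) {M : ℝ}
    (hM : 1 / 2 ≤ μ {x | f x ≤ M}) {t : ℝ} (ht : 0 < t) :
    μ {x | M + t ≤ f x} ≤
      ENNReal.ofReal (exp (-((finrank ℝ E : ℝ) - 1) * t ^ 2 / (2 * L ^ 2))) * 2⁻¹ := by
  have := hμ.isOpenPosMeasure
  obtain ⟨e⟩ := μ.nonempty_of_neZero
  obtain ⟨g, hg, hgf, hmono⟩ := exists_monovary_rearrangement hμ hL.le hf (e : E)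
  have hdist {s : Set ℝ} (hs : MeasurableSet s) : μ (f ⁻¹' s) = μ (g ⁻¹' s) := by
    rw [← Measure.map_apply (hf.lipschitzWith hL.le).continuous.measurable hs, ← hgf,
      Measure.map_apply (hg.lipschitzWith hL.le).continuous.measurable hs]
  have hMg : 1 / 2 ≤ μ {x | g x ≤ M} := hM.trans_eq (hdist measurableSet_Iic)
  calc μ {x | M + t ≤ f x} = μ {x | M + t ≤ g x} := hdist measurableSet_Ici
    _ ≤ μ {x | angle (e : E) x ≤ π / 2 - t / L} :=
        measure_mono fun x hx ↦ hμ.angle_le_of_monovary_inner hE hL hg hmono hMg ht hx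
    _ ≤ ENNReal.ofReal (exp (-((finrank ℝ E - 1 : ℕ) * (t / L) ^ 2) / 2)) * 2⁻¹ :=
        hμ.measure_angle_le_le (by lia) e (by positivity)
    _ = ENNReal.ofReal (exp (-((finrank ℝ E : ℝ) - 1) * t ^ 2 / (2 * L ^ 2))) * 2⁻¹ := by
        rw [Nat.cast_pred (by lia)]
        congr 3
        field_simp

end IsRotationInvariant

end Concentration

theorem exp_neg_sub_one_mul_le (d : ℝ) {a : ℝ} (ha : 0 ≤ a) :
    exp (-(d - 1) * a) ≤ √(π / 2) * exp (-(d - 2) * a) := by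
  have hsqrt : 1 ≤ √(π / 2) := one_le_sqrt.2 (by linarith [two_le_pi])
  calc exp (-(d - 1) * a) ≤ exp (-(d - 2) * a) := exp_le_exp.2 (by linarith)
    _ ≤ √(π / 2) * exp (-(d - 2) * a) := le_mul_of_one_le_left (exp_nonneg _) hsqrt

theorem stmt10_general {E : Type*} [NormedAddCommGroup E] [InnerProductSpace ℝ E]
    [FiniteDimensional ℝ E] [MeasurableSpace E] [BorelSpace E] {μ : Measure (sphere (0 : E) 1)}
    [IsProbabilityMeasure μ] (hμ : IsRotationInvariant μ) {f : sphere (0 : E) 1 → ℝ} {L : ℝ}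
    (hL : 0 < L) (hf : GeodesicLipschitz L f) {M : ℝ} (hM1 : 1 / 2 ≤ μ {x | M ≤ f x})
    (hM2 : 1 / 2 ≤ μ {x | f x ≤ M}) {t : ℝ} (ht : 0 ≤ t) :
    μ {x | t ≤ |f x - M|} ≤
      ENNReal.ofReal (exp (-((finrank ℝ E : ℝ) - 1) * t ^ 2 / (2 * L ^ 2))) := by
  obtain hE | hE := le_or_gt (((finrank ℝ E : ℝ) - 1) * t ^ 2) 0
  · refine prob_le_one.trans (ENNReal.one_le_ofReal.2 (one_le_exp (div_nonneg ?_ (by positivity))))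
    linarith
  have ht' : 0 < t := ht.lt_of_ne fun h ↦ by simp [← h] at hE
  have hdim : 2 ≤ finrank ℝ E := by
    have : (1 : ℝ) < finrank ℝ E := by linarith [pos_of_mul_pos_left hE (sq_nonneg t)]
    exact_mod_cast this
  have hupper := hμ.measure_median_add_le_le hdim hL hf hM2 ht'
  have hlower := hμ.measure_median_add_le_le hdim hL hf.neg (M := -M) (by simpa using hM1) ht'
  calc μ {x | t ≤ |f x - M|} ≤ μ ({x | M + t ≤ f x} ∪ {x | -M + t ≤ (-f) x}) := by
        refine measure_mono fun x (hx : t ≤ |f x - M|) ↦ (le_abs.1 hx).imp (fun h ↦ ?_) fun h ↦ ?_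
        · exact le_sub_iff_add_le'.1 h
        · change -M + t ≤ -f x
          linarith
    _ ≤ _ := (measure_union_le _ _).trans (add_le_add hupper hlower)
    _ = ENNReal.ofReal (exp (-((finrank ℝ E : ℝ) - 1) * t ^ 2 / (2 * L ^ 2))) := by
        rw [← mul_add, ENNReal.inv_two_add_inv_two, mul_one]

/-- Lévy-type concentration around the median: if `f` is `L`-Lipschitz on the
unit sphere `S^{d-1}` with respect to the geodesic metric `dist(x,y) = arccos⟨x,y⟩`, `μ` is
the normalized uniform (rotation invariant) probability measure on the sphere, and `M` is a
median of `f`, then `μ{|f - M| ≥ t} ≤ √(π/2)·exp(-(d-2)t²/(2L²))` for all `t ≥ 0`. -/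
theorem stmt10 {d : ℕ}
    (μ : Measure (Metric.sphere (0 : EuclideanSpace ℝ (Fin d)) 1))
    [IsProbabilityMeasure μ]
    (hinv : ∀ g : EuclideanSpace ℝ (Fin d) ≃ₗᵢ[ℝ] EuclideanSpace ℝ (Fin d),
      μ.map (fun x : Metric.sphere (0 : EuclideanSpace ℝ (Fin d)) 1 =>
        (⟨g ↑x, by simpa using x.2⟩ :
          Metric.sphere (0 : EuclideanSpace ℝ (Fin d)) 1)) = μ)
    (f : Metric.sphere (0 : EuclideanSpace ℝ (Fin d)) 1 → ℝ) (L : ℝ) (hL : 0 < L)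
    (hlip : ∀ x y : Metric.sphere (0 : EuclideanSpace ℝ (Fin d)) 1,
      |f x - f y| ≤ L * Real.arccos (inner (𝕜 := ℝ) (x : EuclideanSpace ℝ (Fin d))
        (y : EuclideanSpace ℝ (Fin d))))
    (M : ℝ)
    (hM1 : 1 / 2 ≤ μ {x | M ≤ f x}) (hM2 : 1 / 2 ≤ μ {x | f x ≤ M}) :
    ∀ t : ℝ, 0 ≤ t → μ {x | t ≤ |f x - M|} ≤
      ENNReal.ofReal (Real.sqrt (π / 2) *
        Real.exp (-((d : ℝ) - 2) * t ^ 2 / (2 * L ^ 2))) := by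
  intro t ht
  refine (stmt10_general hinv hL (fun x y ↦ by rw [angle_coe_sphere]; exact hlip x y)
    hM1 hM2 ht).trans (ENNReal.ofReal_le_ofReal ?_)
  simpa [mul_div_assoc] using exp_neg_sub_one_mul_le d (show 0 ≤ t ^ 2 / (2 * L ^ 2) by positivity)
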